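/- (Generalized Karlsson–Minton formula (1.2) of the paper.) Let a, b, d, c_1,...,c_r be complex numbers, m_1,...,m_r nonnegative integers with |m| = ∑ m_i, and Re(a + |m| + b - d) < 0; assume no denominators vanish. Then ∑_{k=0}^∞ (a)_k (b)_k ∏_{i=1}^r (c_i+m_i)_k / (k! (d)_k ∏_{i=1}^r (c_i)_k) = [Γ(d)Γ(d-a-b)/(Γ(d-a)Γ(d-b))] ∏_{i=1}^r (c_i+1-d)_{m_i}/(c_i)_{m_i} · (a)_{|m|}/(1+a+b-d)_{|m|} × ∑_{x_1=0}^{m_1}⋯∑_{x_r=0}^{m_r} [ ∏_{1≤i<j≤r} (c_i+x_i-c_j-x_j)/(c_i-c_j) · (b+1-d)_{|x|}/(1-|m|-a)_{|x|} · ∏_{i=1}^r (c_i-a)_{x_i}/(1+c_i-d)_{x_i} · ∏_{i,k=1}^r (c_i-c_k-m_k)_{x_i}/(1+c_i-c_k)_{x_i} ], where |x| = x_1+...+x_r. -/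

import Mathlib

open Finset

/-- Pochhammer symbol (rising factorial) `(x)_k`. -/
noncomputable def poch (x : ℂ) (k : ℕ) : ℂ := ∏ j ∈ Finset.range k, (x + j)

open Filter Topology Asymptotics

lemma poch_zero (x : ℂ) : poch x 0 = 1 := by simp [poch]

lemma poch_succ (x : ℂ) (k : ℕ) : poch x (k + 1) = poch x k * (x + k) := by
  simp [poch, prod_range_succ]

lemma poch_add (x : ℂ) (m n : ℕ) : poch x (m + n) = poch x m * poch (x + m) n := by
  simp [poch, prod_range_add, add_assoc]

lemma poch_succ_left (x : ℂ) (k : ℕ) : poch x (k + 1) = x * poch (x + 1) k := by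
  rw [add_comm k 1, poch_add, poch_succ, poch_zero]
  simp

lemma poch_ne_zero {x : ℂ} {n : ℕ} (h : ∀ k < n, x + k ≠ 0) : poch x n ≠ 0 :=
  prod_ne_zero_iff.2 fun k hk => h k (mem_range.1 hk)

lemma poch_reflect (x : ℂ) (n : ℕ) : poch x n = (-1) ^ n * poch (1 - x - n) n := by
  have h : ((-1 : ℂ)) ^ n = ∏ _j ∈ range n, (-1) := by simp
  rw [poch, poch, ← prod_range_reflect, h, ← prod_mul_distrib]
  refine prod_congr rfl fun j hj => ?_
  have := mem_range.1 hj
  rw [Nat.sub_sub, Nat.cast_sub (by omega)]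
  push_cast
  ring

lemma Gamma_add_nat (x : ℂ) (hx : ∀ k : ℕ, x + k ≠ 0) (n : ℕ) :
    Complex.Gamma (x + n) = poch x n * Complex.Gamma x := by
  induction n with
  | zero => simp [poch_zero]
  | succ n ih =>
    rw [Nat.cast_succ, ← add_assoc, Complex.Gamma_add_one _ (hx n), ih, poch_succ]
    ring

lemma Gamma_ne_zero_of_add_nat_ne_zero {x : ℂ} (hx : ∀ k : ℕ, x + k ≠ 0) :
    Complex.Gamma x ≠ 0 :=
  Complex.Gamma_ne_zero fun k h => hx k (by rw [h]; ring)

lemma GammaSeq_eq_div_poch (x : ℂ) (n : ℕ) :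
    Complex.GammaSeq x n = (n : ℂ) ^ x * n.factorial / poch x (n + 1) := rfl

lemma poch_isBigO (a : ℂ) :
    (fun n : ℕ => poch a (n + 1)) =O[atTop] fun n : ℕ => (n : ℂ) ^ a * (n.factorial : ℂ) := by
  by_cases ha : ∀ k : ℕ, a + k ≠ 0
  · exact isBigO_of_div_tendsto_nhds_of_ne_zero (Complex.GammaSeq_tendsto_Gamma a)
      (Gamma_ne_zero_of_add_nat_ne_zero ha)
  · push Not at ha
    obtain ⟨k, hk⟩ := ha
    have : (fun n : ℕ => poch a (n + 1)) =ᶠ[atTop] fun _ => 0 := by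
      filter_upwards [eventually_ge_atTop k] with n hn
      exact prod_eq_zero (mem_range.2 (by omega : k < n + 1)) hk
    exact this.trans_isBigO (isBigO_zero _ _)

lemma inv_poch_isBigO (d : ℂ) :
    (fun n : ℕ => (poch d (n + 1))⁻¹) =O[atTop]
      fun n : ℕ => ((n : ℂ) ^ d * (n.factorial : ℂ))⁻¹ := by
  refine isBigO_of_div_tendsto_nhds ?_ (Complex.Gamma d) ?_
  · filter_upwards [eventually_ne_atTop 0] with n hn h
    have hn' : (n : ℂ) ≠ 0 := Nat.cast_ne_zero.2 hn
    have h' : (n.factorial : ℂ) ≠ 0 := Nat.cast_ne_zero.2 n.factorial_ne_zero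
    simp [Complex.cpow_eq_zero_iff, hn', h'] at h
  · refine (Complex.GammaSeq_tendsto_Gamma d).congr fun n => ?_
    rw [GammaSeq_eq_div_poch, Pi.div_apply, inv_div_inv]

/-- The `k`-th term of the hypergeometric series `₂F₁(a, b; d; 1)`. -/
noncomputable def gaussTerm (a b d : ℂ) (k : ℕ) : ℂ :=
  poch a k * poch b k / ((k.factorial : ℂ) * poch d k)

lemma gaussTerm_isBigO (a b d : ℂ) :
    (fun n : ℕ => gaussTerm a b d (n + 1)) =O[atTop]
      fun n : ℕ => (n : ℝ) ^ ((a + b - d).re - 1) := by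
  have h0 : (fun n : ℕ => ((((n + 1).factorial : ℕ) : ℂ))⁻¹) =O[atTop]
      fun n : ℕ => ((((n + 1).factorial : ℕ) : ℂ))⁻¹ := isBigO_refl _ _
  have h := (((poch_isBigO a).mul (poch_isBigO b)).mul h0).mul (inv_poch_isBigO d)
  have h1 : (fun n : ℕ => gaussTerm a b d (n + 1)) = fun n : ℕ =>
      poch a (n + 1) * poch b (n + 1) * (((n + 1).factorial : ℕ) : ℂ)⁻¹ * (poch d (n + 1))⁻¹ := by
    funext n
    rw [gaussTerm, div_eq_mul_inv, mul_inv, mul_assoc, mul_assoc, mul_assoc]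
  rw [h1]
  refine h.trans (IsBigO.of_bound 1 ?_)
  filter_upwards [eventually_gt_atTop 0] with n hn
  have hn' : (0 : ℝ) < n := Nat.cast_pos.2 hn
  have hc : ∀ z : ℂ, ‖(n : ℂ) ^ z‖ = (n : ℝ) ^ z.re := fun z => by
    rw [← Complex.ofReal_natCast, Complex.norm_cpow_eq_rpow_re_of_pos hn']
  have hf : (0 : ℝ) < n.factorial := Nat.cast_pos.2 n.factorial_pos
  simp only [norm_mul, norm_inv, hc, Complex.norm_natCast, Nat.factorial_succ, Nat.cast_mul]
  rw [Real.norm_of_nonneg (by positivity), Complex.sub_re, Complex.add_re,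
    Real.rpow_sub hn', Real.rpow_sub hn', Real.rpow_add hn', Real.rpow_one]
  have hd : (0 : ℝ) < (n : ℝ) ^ d.re := by positivity
  have : (n : ℝ) ^ a.re * n.factorial * ((n : ℝ) ^ b.re * n.factorial) *
      (((n + 1 : ℕ) : ℝ) * n.factorial)⁻¹ * ((n : ℝ) ^ d.re * n.factorial)⁻¹ =
      (n : ℝ) ^ a.re * (n : ℝ) ^ b.re / (n : ℝ) ^ d.re / ((n + 1 : ℕ) : ℝ) := by
    field_simp
  rw [this, one_mul]
  gcongr
  exact n.le_succ

lemma summable_gaussTerm {a b d : ℂ} (h : (a + b - d).re < 0) : Summable (gaussTerm a b d) :=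
  (summable_nat_add_iff 1).1 <| summable_of_isBigO_nat
    (Real.summable_nat_rpow.2 (by linarith)) (gaussTerm_isBigO a b d)

lemma tendsto_nat_mul_gaussTerm {a b d : ℂ} (h : (a + b - d).re < 0) :
    Tendsto (fun k : ℕ => (k : ℂ) * gaussTerm a b d k) atTop (𝓝 0) := by
  rw [← tendsto_add_atTop_iff_nat 1]
  have h1 : (fun n : ℕ => ((n + 1 : ℕ) : ℂ)) =O[atTop] fun n : ℕ => (n : ℝ) := by
    refine IsBigO.of_bound 2 ?_
    filter_upwards [eventually_ge_atTop 1] with n hn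
    rw [Complex.norm_natCast, Real.norm_of_nonneg (by positivity)]
    exact_mod_cast (by omega : n + 1 ≤ 2 * n)
  refine (h1.mul (gaussTerm_isBigO a b d)).trans_tendsto ?_
  have h2 : Tendsto (fun n : ℕ => (n : ℝ) ^ (-(-(a + b - d).re))) atTop (𝓝 0) :=
    (tendsto_rpow_neg_atTop (by linarith)).comp tendsto_natCast_atTop_atTop
  refine h2.congr' ?_
  filter_upwards [eventually_gt_atTop 0] with n hn
  have hn' : (0 : ℝ) < n := Nat.cast_pos.2 hn
  rw [neg_neg, Real.rpow_sub hn', Real.rpow_one]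
  field_simp

lemma tsum_gaussTerm_succ {a b d : ℂ} (h : (a + b - d).re < 0) (hd : ∀ k : ℕ, d + k ≠ 0) :
    d * (d - a - b) * ∑' k, gaussTerm a b d k =
      (d - a) * (d - b) * ∑' k, gaussTerm a b (d + 1) k := by
  have h' : (a + b - (d + 1)).re < 0 := by
    have : (a + b - (d + 1)).re = (a + b - d).re - 1 := by simp; ring
    linarith
  have hd0 : d ≠ 0 := by simpa using hd 0
  have key : ∀ k : ℕ, (d - a) * (d - b) * gaussTerm a b (d + 1) k
      - d * (d - a - b) * gaussTerm a b d k =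
      d * (((k + 1 : ℕ) : ℂ) * gaussTerm a b d (k + 1)) - d * ((k : ℂ) * gaussTerm a b d k) := by
    intro k
    have hp : poch d k ≠ 0 := poch_ne_zero fun j _ => hd j
    have hdk := hd k
    have h1 : poch (d + 1) k = poch d k * (d + k) / d := by
      rw [← poch_succ, poch_succ_left]; field_simp
    have hf : (k.factorial : ℂ) ≠ 0 := Nat.cast_ne_zero.2 k.factorial_ne_zero
    have hk : ((k : ℂ) + 1) ≠ 0 := Nat.cast_add_one_ne_zero k
    simp only [gaussTerm, poch_succ, h1, Nat.factorial_succ]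
    push_cast
    field_simp
    ring
  have hs := ((summable_gaussTerm h').hasSum.mul_left ((d - a) * (d - b))).sub
    ((summable_gaussTerm h).hasSum.mul_left (d * (d - a - b)))
  have ht := hs.tendsto_sum_nat
  simp only [key] at ht
  simp only [sum_range_sub (fun k : ℕ => d * ((k : ℂ) * gaussTerm a b d k))] at ht
  have h0 := ((tendsto_nat_mul_gaussTerm h).const_mul d).sub_const
    (d * (((0 : ℕ) : ℂ) * gaussTerm a b d 0))
  have := tendsto_nhds_unique ht h0
  simp at this
  linear_combination -this

lemma tsum_gaussTerm_iterate {a b d : ℂ} (h : (a + b - d).re < 0) (hd : ∀ k : ℕ, d + k ≠ 0)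
    (n : ℕ) :
    poch d n * poch (d - a - b) n * ∑' k, gaussTerm a b d k =
      poch (d - a) n * poch (d - b) n * ∑' k, gaussTerm a b (d + n) k := by
  induction n with
  | zero => simp [poch_zero]
  | succ n ih =>
    have h' : (a + b - (d + n)).re < 0 := by
      have : (a + b - (d + n)).re = (a + b - d).re - n := by simp; ring
      have := n.cast_nonneg (α := ℝ)
      linarith
    have := tsum_gaussTerm_succ h' (fun k => by
      have := hd (n + k); push_cast at this; rwa [add_assoc])
    simp only [poch_succ]
    push_cast
    rw [← add_assoc]
    linear_combination ((d + n) * (d - a - b + n)) * ih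
      + poch (d - a) n * poch (d - b) n * this

lemma tendsto_tsum_gaussTerm (a b d : ℂ) :
    Tendsto (fun n : ℕ => ∑' k, gaussTerm a b (d + n) k) atTop (𝓝 1) := by
  obtain ⟨N, hN⟩ := exists_nat_gt (max (-d.re) ((a + b - d).re))
  have hN1 : 0 < d.re + N := by have := (le_max_left _ _).trans_lt hN; linarith
  have hN2 : (a + b - ((d.re + N : ℝ) : ℂ)).re < 0 := by
    have := (le_max_right _ _).trans_lt hN
    simp at this ⊢
    linarith
  have hlim : Tendsto (fun n : ℕ => ∑' k, gaussTerm a b (d + n) k) atTop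
      (𝓝 (∑' k, poch a k * poch b k / (k.factorial : ℂ) * 0 ^ k)) := by
    refine tendsto_tsum_of_dominated_convergence (summable_gaussTerm hN2).norm ?_ ?_
    · intro k
      have h0 : ∀ j : ℕ, Tendsto (fun n : ℕ => (d + n + j)⁻¹) atTop (𝓝 0) := fun j => by
        have h1 : Tendsto (fun n : ℕ => (d + j) + (n : ℂ)) atTop (Bornology.cobounded ℂ) :=
          (tendsto_const_add_cobounded (d + j)).comp (tendsto_norm_atTop_iff_cobounded.1 <| by
              simpa using tendsto_natCast_atTop_atTop (R := ℝ))
        refine (tendsto_inv₀_cobounded.comp h1).congr fun n => ?_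
        simp only [Function.comp]
        congr 1
        ring
      have h1 := tendsto_finsetProd (range k) fun j _ => h0 j
      have h2 := h1.const_mul (poch a k * poch b k / (k.factorial : ℂ))
      simp only [prod_const, card_range] at h2
      refine h2.congr fun n => ?_
      rw [prod_inv_distrib, gaussTerm, ← div_eq_mul_inv, div_div]
      rfl
    · filter_upwards [eventually_ge_atTop N] with n hn k
      rw [gaussTerm, gaussTerm, norm_div, norm_div, norm_mul (k.factorial : ℂ),
        norm_mul (k.factorial : ℂ)]
      have hle : ‖poch ((d.re + N : ℝ) : ℂ) k‖ ≤ ‖poch (d + n) k‖ := by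
        simp only [poch, norm_prod]
        refine prod_le_prod (fun _ _ => norm_nonneg _) fun j _ => ?_
        rw [← Complex.ofReal_natCast j, ← Complex.ofReal_add, Complex.norm_real,
          Real.norm_of_nonneg (by positivity)]
        refine le_trans ?_ (Complex.re_le_norm _)
        have : (N : ℝ) ≤ n := Nat.cast_le.2 hn
        simp
        linarith
      have hpos : 0 < ‖poch ((d.re + N : ℝ) : ℂ) k‖ := by
        refine norm_pos_iff.2 (poch_ne_zero fun j _ => ?_)
        rw [← Complex.ofReal_natCast j, ← Complex.ofReal_add, Complex.ofReal_ne_zero]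
        positivity
      have hf : 0 < ‖(k.factorial : ℂ)‖ :=
        norm_pos_iff.2 (Nat.cast_ne_zero.2 k.factorial_ne_zero)
      gcongr
  rw [tsum_eq_single 0 (fun k hk => by simp [hk])] at hlim
  simpa [poch_zero] using hlim

/-- Gauss's summation theorem. -/
theorem hasSum_gaussTerm {a b d : ℂ} (h : (a + b - d).re < 0) (hd : ∀ k : ℕ, d + k ≠ 0)
    (hda : ∀ k : ℕ, d - a + k ≠ 0) (hdb : ∀ k : ℕ, d - b + k ≠ 0) :
    HasSum (gaussTerm a b d) (Complex.Gamma d * Complex.Gamma (d - a - b) /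
      (Complex.Gamma (d - a) * Complex.Gamma (d - b))) := by
  have hlim := (((Complex.GammaSeq_tendsto_Gamma d).mul
    (Complex.GammaSeq_tendsto_Gamma (d - a - b))).div
    ((Complex.GammaSeq_tendsto_Gamma (d - a)).mul (Complex.GammaSeq_tendsto_Gamma (d - b)))
    (mul_ne_zero (Gamma_ne_zero_of_add_nat_ne_zero hda)
      (Gamma_ne_zero_of_add_nat_ne_zero hdb))).mul
    ((tendsto_add_atTop_iff_nat 1).2 (tendsto_tsum_gaussTerm a b d))
  rw [mul_one] at hlim
  have hdab : ∀ k : ℕ, d - a - b + k ≠ 0 := fun k hk => by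
    have := congrArg Complex.re hk
    simp at this h
    have := k.cast_nonneg (α := ℝ)
    linarith
  have hconst : ∀ᶠ n : ℕ in atTop, ∑' k, gaussTerm a b d k =
      Complex.GammaSeq d n * Complex.GammaSeq (d - a - b) n /
      (Complex.GammaSeq (d - a) n * Complex.GammaSeq (d - b) n) *
      ∑' k, gaussTerm a b (d + (n + 1 : ℕ)) k := by
    filter_upwards [eventually_gt_atTop 0] with n hn
    have hn' : (n : ℂ) ≠ 0 := Nat.cast_ne_zero.2 hn.ne'
    have key := tsum_gaussTerm_iterate h hd (n + 1)
    have h1 : poch d (n + 1) ≠ 0 := poch_ne_zero fun j _ => hd j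
    have h2 : poch (d - a - b) (n + 1) ≠ 0 := poch_ne_zero fun j _ => hdab j
    have h3 : poch (d - a) (n + 1) ≠ 0 := poch_ne_zero fun j _ => hda j
    have h4 : poch (d - b) (n + 1) ≠ 0 := poch_ne_zero fun j _ => hdb j
    have hf : (n.factorial : ℂ) ≠ 0 := Nat.cast_ne_zero.2 n.factorial_ne_zero
    have hpow : (n : ℂ) ^ d * (n : ℂ) ^ (d - a - b) = (n : ℂ) ^ (d - a) * (n : ℂ) ^ (d - b) := by
      rw [← Complex.cpow_add _ _ hn', ← Complex.cpow_add _ _ hn']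
      congr 1
      ring
    have h5 : (n : ℂ) ^ (d - a) ≠ 0 := by simp [Complex.cpow_eq_zero_iff, hn']
    have h6 : (n : ℂ) ^ (d - b) ≠ 0 := by simp [Complex.cpow_eq_zero_iff, hn']
    simp only [GammaSeq_eq_div_poch]
    generalize (∑' k, gaussTerm a b (d + (n + 1 : ℕ)) k) = F at key ⊢
    generalize (∑' k, gaussTerm a b d k) = G at key ⊢
    field_simp
    linear_combination (n : ℂ) ^ (d - a) * (n : ℂ) ^ (d - b) * key
      - F * poch (d - a) (n + 1) * poch (d - b) (n + 1) * hpow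
  have := tendsto_nhds_unique hlim (tendsto_const_nhds.congr' hconst)
  rw [this]
  exact (summable_gaussTerm h).hasSum

section Interpolation

variable {ι : Type*} [DecidableEq ι]

lemma prod_one_add_div_eq (u : ι → ℂ) (t : ℂ) (S : Finset ι) (hu : Set.InjOn u S) (v : ℂ)
    (hv : ∀ i ∈ S, v ≠ u i) :
    ∏ i ∈ S, (1 + t / (v - u i)) =
      1 + ∑ i ∈ S, t * (∏ j ∈ S.erase i, (1 + t / (u i - u j))) / (v - u i) := by
  induction S using Finset.induction_on generalizing v with
  | empty => simp
  | insert p S hp ih =>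
    have hu' : Set.InjOn u S := hu.mono (by simp)
    have hpS : ∀ i ∈ S, u p ≠ u i := fun i hi h =>
      hp (hu (by simp) (by simp [hi]) h ▸ hi)
    have hvS : ∀ i ∈ S, v ≠ u i := fun i hi => hv i (mem_insert_of_mem hi)
    have hvp : v - u p ≠ 0 := sub_ne_zero.2 (hv p (mem_insert_self _ _))
    have hi : ∀ i ∈ S, ∏ j ∈ (insert p S).erase i, (1 + t / (u i - u j)) =
        (1 + t / (u i - u p)) * ∏ j ∈ S.erase i, (1 + t / (u i - u j)) := fun i hi => by
      have hne : p ≠ i := fun h => hp (h ▸ hi)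
      rw [erase_insert_of_ne hne, prod_insert (fun h => hp (mem_of_mem_erase h))]
    rw [prod_insert hp, sum_insert hp, erase_insert hp, ih hu' v hvS, ih hu' (u p) hpS]
    have key : ∑ i ∈ S, t * (∏ j ∈ (insert p S).erase i, (1 + t / (u i - u j))) / (v - u i) =
        (1 + t / (v - u p)) * ∑ i ∈ S, t * (∏ j ∈ S.erase i, (1 + t / (u i - u j))) / (v - u i)
        - t / (v - u p) *
          ∑ i ∈ S, t * (∏ j ∈ S.erase i, (1 + t / (u i - u j))) / (u p - u i) := by
      rw [mul_sum, mul_sum, ← sum_sub_distrib]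
      refine sum_congr rfl fun i h => ?_
      have h1 : v - u i ≠ 0 := sub_ne_zero.2 (hvS i h)
      have h2 : u p - u i ≠ 0 := sub_ne_zero.2 (hpS i h)
      rw [hi i h, show u i - u p = -(u p - u i) by ring]
      field_simp
      ring
    rw [key]
    ring

lemma sum_prod_erase_one_add_div (u : ι → ℂ) (t : ℂ) (S : Finset ι) (hu : Set.InjOn u S) :
    ∑ i ∈ S, t * ∏ j ∈ S.erase i, (1 + t / (u i - u j)) = t * #S := by
  induction S using Finset.induction_on with
  | empty => simp
  | insert p S hp ih =>
    have hu' : Set.InjOn u S := hu.mono (by simp)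
    have hpS : ∀ i ∈ S, u p ≠ u i := fun i hi h =>
      hp (hu (by simp) (by simp [hi]) h ▸ hi)
    have hi : ∀ i ∈ S, t * ∏ j ∈ (insert p S).erase i, (1 + t / (u i - u j)) =
        t * ∏ j ∈ S.erase i, (1 + t / (u i - u j)) -
        t * (t * (∏ j ∈ S.erase i, (1 + t / (u i - u j))) / (u p - u i)) := fun i hi => by
      have hne : p ≠ i := fun h => hp (h ▸ hi)
      rw [erase_insert_of_ne hne, prod_insert (fun h => hp (mem_of_mem_erase h)),
        show u i - u p = -(u p - u i) by ring]
      have h2 : u p - u i ≠ 0 := sub_ne_zero.2 (hpS i hi)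
      field_simp
      ring
    rw [sum_insert hp, erase_insert hp, sum_congr rfl hi, sum_sub_distrib, ih hu', ← mul_sum,
      prod_one_add_div_eq u t S hu' (u p) hpS, card_insert_of_notMem hp]
    push_cast
    ring

lemma sub_mul_prod_one_add_div (u : ι → ℂ) (t w : ℂ) (S : Finset ι) (hu : Set.InjOn u S) (v : ℂ)
    (hv : ∀ i ∈ S, v ≠ u i) :
    (v - w) * ∏ i ∈ S, (1 + t / (v - u i)) =
      (v - w) + t * #S +
        ∑ i ∈ S, t * (u i - w) * (∏ j ∈ S.erase i, (1 + t / (u i - u j))) / (v - u i) := by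
  rw [prod_one_add_div_eq u t S hu v hv, ← sum_prod_erase_one_add_div u t S hu, mul_add, mul_one,
    mul_sum, add_assoc, ← sum_add_distrib]
  congr 1
  refine sum_congr rfl fun i hi => ?_
  have := sub_ne_zero.2 (hv i hi)
  field_simp
  ring

lemma sum_powerset_sum_mem (T : Finset ι) (G : Finset ι → ι → ℂ) :
    ∑ S ∈ T.powerset, ∑ i ∈ S, G S i =
      ∑ S ∈ T.powerset, ∑ k ∈ T \ S, G (insert k S) k := by
  rw [sum_sigma', sum_sigma']
  refine sum_bij' (fun x _ => ⟨x.1.erase x.2, x.2⟩) (fun x _ => ⟨insert x.2 x.1, x.2⟩) ?_ ?_ ?_ ?_ ?_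
  · rintro ⟨S, i⟩ h
    simp only [mem_sigma, mem_powerset, Finset.mem_sdiff, mem_erase] at h ⊢
    exact ⟨(erase_subset _ _).trans h.1, h.1 h.2, by simp⟩
  · rintro ⟨S, i⟩ h
    simp only [mem_sigma, mem_powerset, Finset.mem_sdiff] at h ⊢
    exact ⟨insert_subset h.2.1 h.1, mem_insert_self _ _⟩
  · rintro ⟨S, i⟩ h
    simp only [mem_sigma] at h
    simp [insert_erase h.2]
  · rintro ⟨S, i⟩ h
    simp only [mem_sigma, Finset.mem_sdiff] at h
    simp [erase_insert h.2.2]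
  · rintro ⟨S, i⟩ h
    simp only [mem_sigma] at h
    simp [insert_erase h.2]

/-- The weight of a pair of disjoint sets of nodes in `poch_mul_prod_eq_sum_powerset`. -/
noncomputable def splitWeight (u : ι → ℂ) (a d : ℂ) (S C : Finset ι) : ℂ :=
  (∏ i ∈ S, ∏ k ∈ C, (u i - u k - 1) / (u i - u k)) * (∏ i ∈ S, (a - u i)) *
    ∏ k ∈ C, (1 + u k - d)

lemma splitWeight_insert_left (u : ι → ℂ) (a d : ℂ) {S : Finset ι} (C : Finset ι) {v : ι}
    (hv : v ∉ S) :
    splitWeight u a d (insert v S) C =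
      splitWeight u a d S C * ((a - u v) * ∏ k ∈ C, (u v - u k - 1) / (u v - u k)) := by
  simp only [splitWeight, prod_insert hv]
  ring

lemma splitWeight_insert_right (u : ι → ℂ) (a d : ℂ) (S : Finset ι) {C : Finset ι} {v : ι}
    (hv : v ∉ C) :
    splitWeight u a d S (insert v C) =
      splitWeight u a d S C * ((1 + u v - d) * ∏ i ∈ S, (u i - u v - 1) / (u i - u v)) := by
  simp only [splitWeight, prod_insert hv, prod_mul_distrib]
  ring

lemma sub_sub_one_div_eq {x y : ℂ} (h : x ≠ y) : (x - y - 1) / (x - y) = 1 + -1 / (x - y) := by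
  have := sub_ne_zero.2 h
  field_simp
  ring

lemma sub_sub_one_div_eq' {x y : ℂ} (h : x ≠ y) : (x - y - 1) / (x - y) = 1 + 1 / (y - x) := by
  have h1 := sub_ne_zero.2 h
  rw [show y - x = -(x - y) by ring]
  field_simp
  ring

theorem poch_mul_prod_eq_sum_powerset (u : ι → ℂ) (a d z : ℂ) (T : Finset ι)
    (hu : Set.InjOn u T) :
    poch (1 + a - d) #T * ∏ i ∈ T, (u i + z) =
      ∑ S ∈ T.powerset, splitWeight u a d S (T \ S) *
        (poch (a + z) (#T - #S) * poch (z + d - #S) #S) := by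
  induction T using Finset.induction_on with
  | empty => simp [splitWeight, poch_zero]
  | insert v T hv ih =>
    have hu' : Set.InjOn u T := hu.mono (by simp)
    have hvT : ∀ i ∈ T, u v ≠ u i := fun i hi h =>
      hv (hu (by simp) (by simp [hi]) h ▸ hi)
    set e : ℕ → ℂ := fun s => poch (a + z) (#T + 1 - s) * poch (z + d - s) s with he
    set e' : ℕ → ℂ := fun s => poch (a + z) (#T - s) * poch (z + d - s) s with he'
    have he1 : ∀ s ≤ #T, e s = (a + z + (#T - s : ℂ)) * e' s := fun s hs => by
      simp only [he, he']
      rw [show #T + 1 - s = (#T - s) + 1 by omega, poch_succ, Nat.cast_sub hs]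
      ring
    have he2 : ∀ s ≤ #T, e (s + 1) = (z + d - s - 1) * e' s := fun s hs => by
      simp only [he, he']
      rw [show #T + 1 - (s + 1) = #T - s by omega, poch_succ_left]
      push_cast
      rw [show z + d - (s + 1 : ℂ) + 1 = z + d - s by ring]
      ring
    rw [prod_insert hv, card_insert_of_notMem hv, sum_powerset_insert hv, ← sum_add_distrib,
      poch_succ]
    set R : Finset ι → ι → ℂ := fun S i => ∏ j ∈ S.erase i, (1 + 1 / (u i - u j)) with hR
    set Q : Finset ι → ι → ℂ := fun S i => ∏ j ∈ S.erase i, (1 + -1 / (u i - u j)) with hQ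
    have hterm : ∀ S ∈ T.powerset,
        splitWeight u a d S (insert v T \ S) *
          (poch (a + z) (#T + 1 - #S) * poch (z + d - #S) #S) +
        splitWeight u a d (insert v S) (insert v T \ insert v S) *
          (poch (a + z) (#T + 1 - #(insert v S)) *
            poch (z + d - #(insert v S)) #(insert v S)) =
        (1 + a - d + #T) * (u v + z) * (splitWeight u a d S (T \ S) * e' #S) +
        ((∑ i ∈ S, splitWeight u a d S (T \ S) * (1 + u i - d) * R S i / (u v - u i) * e #S)
        - ∑ k ∈ T \ S, splitWeight u a d S (T \ S) * (a - u k) * Q (T \ S) k / (u v - u k)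
            * e (#S + 1)) := by
      intro S hS
      have hST := mem_powerset.1 hS
      have hvS : v ∉ S := fun h => hv (hST h)
      have hvC : v ∉ T \ S := fun h => hv (Finset.mem_sdiff.1 h).1
      have hcard : #S ≤ #T := card_le_card hST
      have hcd : (#(T \ S) : ℂ) = #T - #S := by
        rw [card_sdiff_of_subset hST, Nat.cast_sub hcard]
      have h1 := sub_mul_prod_one_add_div u 1 (d - 1) S (hu'.mono hST) (u v)
        fun i hi => hvT i (hST hi)
      have h2 := sub_mul_prod_one_add_div u (-1) a (T \ S) (hu'.mono (by simp)) (u v)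
        fun i hi => hvT i (Finset.mem_sdiff.1 hi).1
      rw [insert_sdiff_of_notMem _ hvS, insert_sdiff_insert, sdiff_insert_of_notMem hv,
        splitWeight_insert_right _ _ _ _ hvC, splitWeight_insert_left _ _ _ _ hvS,
        card_insert_of_notMem hvS,
        prod_congr rfl fun i hi => sub_sub_one_div_eq' (hvT i (hST hi)).symm,
        prod_congr rfl fun i hi => sub_sub_one_div_eq (hvT i (Finset.mem_sdiff.1 hi).1)]
      change _ * _ * e #S + _ * _ * e (#S + 1) = _
      have s1 : ∑ i ∈ S, splitWeight u a d S (T \ S) * (1 + u i - d) * R S i / (u v - u i) * e #S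
          = splitWeight u a d S (T \ S) * e #S *
            ∑ i ∈ S, 1 * (u i - (d - 1)) * R S i / (u v - u i) := by
        rw [mul_sum]
        exact sum_congr rfl fun i _ => by ring
      have s2 : ∑ k ∈ T \ S, splitWeight u a d S (T \ S) * (a - u k) * Q (T \ S) k / (u v - u k)
            * e (#S + 1)
          = splitWeight u a d S (T \ S) * e (#S + 1) *
            ∑ i ∈ T \ S, -1 * (u i - a) * Q (T \ S) i / (u v - u i) := by
        rw [mul_sum]
        exact sum_congr rfl fun i _ => by ring
      rw [s1, s2]
      simp only [hR, hQ]
      rw [hcd] at h2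
      linear_combination splitWeight u a d S (T \ S) * e #S * h1
        - splitWeight u a d S (T \ S) * e (#S + 1) * h2
        + splitWeight u a d S (T \ S) * (u v - (d - 1) + #S) * he1 _ hcard
        - splitWeight u a d S (T \ S) * (u v - a - (#T - #S)) * he2 _ hcard
    rw [sum_congr rfl hterm, sum_add_distrib, sum_sub_distrib, sum_powerset_sum_mem,
      ← mul_sum, ← ih hu']
    have hcancel : ∀ x y p q : ℂ, p = q → x = y → x = y + (p - q) := by
      rintro x y p q rfl rfl
      ring
    refine hcancel _ _ _ _ ?_ (by ring)
    · refine sum_congr rfl fun S hS => sum_congr rfl fun k hk => ?_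
      have hST := mem_powerset.1 hS
      obtain ⟨hkT, hkS⟩ := Finset.mem_sdiff.1 hk
      have hC : T \ S = insert k (T \ insert k S) := by
        ext j
        by_cases h : j = k <;> simp [h, hkT, hkS]
      have hkC : k ∉ T \ insert k S := by simp
      have hne : ∀ j ∈ T, j ≠ k → u k ≠ u j := fun j hj hjk h => hjk (hu' hkT hj h).symm
      rw [hC, splitWeight_insert_right _ _ _ _ hkC, splitWeight_insert_left _ _ _ _ hkS,
        card_insert_of_notMem hkS]
      simp only [hR, hQ, erase_insert hkS, erase_insert hkC]
      rw [prod_congr rfl fun i hi => (sub_sub_one_div_eq'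
          (hne i (hST hi) (ne_of_mem_of_not_mem hi hkS)).symm).symm,
        prod_congr rfl fun i hi => (sub_sub_one_div_eq
          (hne i (Finset.mem_sdiff.1 hi).1 (ne_of_mem_of_not_mem hi hkC))).symm]
      ring

end Interpolation

lemma prod_Ico_telescope (y : ℂ) {p q : ℕ} (hpq : p ≤ q)
    (h : ∀ l, p ≤ l → l ≤ q → y - l ≠ 0) :
    ∏ l ∈ Ico p q, (y - l - 1) / (y - l) = (y - q) / (y - p) := by
  induction q, hpq using Nat.le_induction with
  | base => simp [div_self (h p le_rfl le_rfl)]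
  | succ n hn ih =>
    rw [prod_Ico_succ_top hn, ih fun l h1 h2 => h l h1 (by omega)]
    have h1 := h p le_rfl (by omega)
    have h2 := h n hn (by omega)
    push_cast
    field_simp
    ring

lemma poch_pair (δ : ℂ) (p q : ℕ) :
    δ * (poch (1 + δ) p * poch (1 - δ) q) =
      (δ + p - q) * (poch (δ - q) p * poch (-δ - p) q) := by
  have h1 : δ * (poch (1 + δ) p * poch (1 - δ) q) = (-1) ^ q * poch (δ - q) (q + (p + 1)) := by
    rw [poch_reflect (1 - δ) q, poch_add, poch_succ_left,
      show 1 - (1 - δ) - (q : ℂ) = δ - q by ring, show δ - (q : ℂ) + q = δ by ring, add_comm δ 1]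
    ring
  have h2 : (δ + p - q) * (poch (δ - q) p * poch (-δ - p) q) =
      (-1) ^ q * poch (δ - q) (p + (q + 1)) := by
    rw [poch_reflect (-δ - p) q, poch_add, poch_succ_left,
      show 1 - (-δ - (p : ℂ)) - q = δ - q + p + 1 by ring]
    ring
  rw [h1, h2]
  congr 2
  omega

/-- The part of the summand on the right-hand side that does not involve `b`. -/
noncomputable def kmCoeff {r : ℕ} (a d : ℂ) (c : Fin r → ℂ) (m x : Fin r → ℕ) : ℂ :=
  (∏ i : Fin r, ∏ j ∈ univ.filter (fun j => i < j), (c i + x i - c j - x j) / (c i - c j)) *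
    (∏ i : Fin r, poch (c i - a) (x i) / poch (1 + c i - d) (x i)) *
    ∏ i : Fin r, ∏ k : Fin r, poch (c i - c k - m k) (x i) / poch (1 + c i - c k) (x i)

section Strings

variable {r : ℕ} {c : Fin r → ℂ} {m : Fin r → ℕ}

lemma prod_prod_poch_div {x : Fin r → ℕ} (hcc : ∀ i j : Fin r, i ≠ j → c i ≠ c j)
    (hD : ∀ i k, poch (c i - c k - x k) (x i) ≠ 0) :
    ∏ i, ∏ k, poch (1 + c i - c k) (x i) / poch (c i - c k - x k) (x i) =
      (-1) ^ (∑ i, x i) * ∏ i : Fin r, ∏ j ∈ univ.filter (fun j => i < j),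
        (c i + x i - c j - x j) / (c i - c j) := by
  set f : Fin r → Fin r → ℂ := fun k i =>
    poch (1 + c i - c k) (x i) / poch (c i - c k - x k) (x i) with hf
  have hdiag : ∀ i, f i i = (-1) ^ x i := fun i => by
    have h := poch_reflect (1 + c i - c i) (x i)
    have hD' := hD i i
    rw [show 1 - (1 + c i - c i) - (x i : ℂ) = c i - c i - x i by ring] at h
    simp only [hf]
    rw [h, mul_div_cancel_right₀ _ hD']
  have hsplit : ∏ i, ∏ k, f k i = (∏ i, f i i) * ∏ i, ∏ k ∈ {i}ᶜ, f k i := by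
    rw [← prod_mul_distrib]
    refine prod_congr rfl fun i _ => ?_
    rw [compl_singleton, mul_prod_erase univ (fun k => f k i) (mem_univ i)]
  change ∏ i, ∏ k, f k i = _
  rw [hsplit, ← prod_prod_Ioi_mul_eq_prod_prod_off_diag, prod_congr rfl fun i _ => hdiag i,
    prod_pow_eq_pow_sum]
  congr 1
  refine prod_congr rfl fun i _ => ?_
  have hI : Ioi i = univ.filter (fun j => i < j) := by ext; simp
  rw [hI]
  refine prod_congr rfl fun k hk => ?_
  have hik : i ≠ k := ne_of_lt (mem_filter.1 hk).2
  have h0 : c i - c k ≠ 0 := sub_ne_zero.2 (hcc i k hik)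
  have h := poch_pair (c i - c k) (x i) (x k)
  have h1 := hD i k
  have h2 := hD k i
  rw [show -(c i - c k) - (x i : ℂ) = c k - c i - x i by ring,
    show 1 - (c i - c k) = 1 + c k - c i by ring,
    show 1 + (c i - c k) = 1 + c i - c k by ring] at h
  simp only [hf]
  field_simp
  linear_combination h

lemma string_sub_ne_zero (hcc : ∀ i j : Fin r, i ≠ j → c i ≠ c j)
    (hcck : ∀ i k : Fin r, poch (1 + c i - c k) (m i) ≠ 0) {i k : Fin r} (hik : i ≠ k) {j l : ℕ}
    (hj : j < m i) (hl : l ≤ m k) : c i - c k + j - l ≠ 0 := by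
  intro h
  rcases lt_trichotomy j l with hlt | rfl | hlt
  · obtain ⟨n, rfl⟩ := Nat.exists_eq_add_of_lt hlt
    refine prod_ne_zero_iff.1 (hcck k i) n (mem_range.2 (by omega)) ?_
    push_cast at h
    linear_combination -h
  · exact hcc i k hik (by linear_combination h)
  · obtain ⟨n, rfl⟩ := Nat.exists_eq_add_of_lt hlt
    refine prod_ne_zero_iff.1 (hcck i k) n (mem_range.2 (by omega)) ?_
    push_cast at h
    linear_combination h

lemma splitWeight_strings (a d : ℂ) {x : Fin r → ℕ} (hx : ∀ i, x i ≤ m i)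
    (hcc : ∀ i j : Fin r, i ≠ j → c i ≠ c j)
    (hcd : ∀ i, poch (1 + c i - d) (m i) ≠ 0)
    (hcck : ∀ i k : Fin r, poch (1 + c i - c k) (m i) ≠ 0) :
    splitWeight (fun p : Σ _ : Fin r, ℕ => c p.1 + p.2) a d
        (univ.sigma fun i => range (x i)) (univ.sigma fun i => Ico (x i) (m i)) =
      (∏ i, poch (1 + c i - d) (m i)) * kmCoeff a d c m x := by
  have hne : ∀ i k j l, j < x i → x k ≤ l → l ≤ m k → c i - c k + (j : ℂ) - (l : ℂ) ≠ 0 := by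
    intro i k j l hj hl hlm
    by_cases hik : i = k
    · subst hik
      rw [sub_self, zero_add, sub_ne_zero, Ne, Nat.cast_inj]
      omega
    · exact string_sub_ne_zero hcc hcck hik (hj.trans_le (hx i)) hlm
  have hD : ∀ i k, poch (c i - c k - x k) (x i) ≠ 0 := fun i k => poch_ne_zero fun j hj => by
    have := hne i k j (x k) hj le_rfl (hx k)
    rwa [sub_add_eq_add_sub]
  have hE : ∀ i k, poch (1 + c i - c k) (x i) ≠ 0 := fun i k => by
    have h := hcck i k
    rw [← Nat.add_sub_cancel' (hx i), poch_add] at h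
    exact left_ne_zero_of_mul h
  have h1 : ∏ i, ∏ j ∈ range (x i), (a - (c i + (j : ℂ))) =
      (-1) ^ (∑ i, x i) * ∏ i, poch (c i - a) (x i) := by
    rw [← prod_pow_eq_pow_sum, ← prod_mul_distrib]
    refine prod_congr rfl fun i _ => ?_
    have : ((-1 : ℂ)) ^ x i = ∏ _j ∈ range (x i), (-1) := by simp
    rw [this, poch, ← prod_mul_distrib]
    exact prod_congr rfl fun j _ => by ring
  have h2 : ∏ i, ∏ l ∈ Ico (x i) (m i), (1 + (c i + (l : ℂ)) - d) =
      (∏ i, poch (1 + c i - d) (m i)) * ∏ i, (poch (1 + c i - d) (x i))⁻¹ := by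
    rw [← prod_mul_distrib]
    refine prod_congr rfl fun i _ => ?_
    have h := hcd i
    rw [← Nat.add_sub_cancel' (hx i), poch_add] at h
    have h' := left_ne_zero_of_mul h
    rw [eq_mul_inv_iff_mul_eq₀ h', mul_comm, poch, poch, ← prod_range_mul_prod_Ico _ (hx i)]
    congr 1
    exact prod_congr rfl fun j _ => by ring
  have h3 : ∏ i, ∏ j ∈ range (x i), ∏ k, ∏ l ∈ Ico (x k) (m k),
      (c i + (j : ℂ) - (c k + (l : ℂ)) - 1) / (c i + (j : ℂ) - (c k + (l : ℂ))) =
      ∏ i, ∏ k, poch (c i - c k - m k) (x i) / poch (c i - c k - x k) (x i) := by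
    refine prod_congr rfl fun i _ => ?_
    rw [Finset.prod_comm]
    refine prod_congr rfl fun k _ => ?_
    rw [poch, poch, ← prod_div_distrib]
    refine prod_congr rfl fun j hj => ?_
    have h := prod_Ico_telescope (c i - c k + j) (hx k)
      fun l hl hlm => hne i k j l (mem_range.1 hj) hl hlm
    rw [show c i - c k - (m k : ℂ) + j = c i - c k + j - m k by ring,
      show c i - c k - (x k : ℂ) + j = c i - c k + j - x k by ring, ← h]
    refine prod_congr rfl fun l _ => ?_
    rw [show c i + (j : ℂ) - (c k + l) = c i - c k + j - l by ring]
  have h4 : ∏ i, ∏ k, poch (c i - c k - m k) (x i) / poch (c i - c k - x k) (x i) =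
      (∏ i, ∏ k, poch (c i - c k - m k) (x i) / poch (1 + c i - c k) (x i)) *
      ∏ i, ∏ k, poch (1 + c i - c k) (x i) / poch (c i - c k - x k) (x i) := by
    rw [← prod_mul_distrib]
    refine prod_congr rfl fun i _ => ?_
    rw [← prod_mul_distrib]
    refine prod_congr rfl fun k _ => ?_
    rw [div_mul_div_cancel₀ (hE i k)]
  have h5 : ((-1 : ℂ) ^ ∑ i, x i) * (-1) ^ ∑ i, x i = 1 := by
    rw [← mul_pow]
    simp
  simp only [splitWeight, prod_sigma]
  rw [h1, h2, h3, h4, prod_prod_poch_div hcc hD, kmCoeff]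
  simp only [prod_div_distrib (f := fun i => poch (c i - a) (x i)), prod_inv_distrib,
    div_eq_mul_inv (∏ i, poch (c i - a) (x i))]
  linear_combination (∏ i : Fin r, ∏ j ∈ univ.filter (fun j => i < j),
      (c i + x i - c j - x j) / (c i - c j)) *
    (∏ i, ∏ k, poch (c i - c k - m k) (x i) / poch (1 + c i - c k) (x i)) *
    (∏ i, poch (c i - a) (x i)) * (∏ i, poch (1 + c i - d) (m i)) *
    (∏ i, poch (1 + c i - d) (x i))⁻¹ * h5

lemma exists_eq_sigma_range_of_splitWeight_ne_zero (c : Fin r → ℂ) (a d : ℂ)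
    {S : Finset (Σ _ : Fin r, ℕ)} (hS : S ⊆ univ.sigma fun i => range (m i))
    (hw : splitWeight (fun p : Σ _ : Fin r, ℕ => c p.1 + p.2) a d S
      ((univ.sigma fun i => range (m i)) \ S) ≠ 0) :
    ∃ x : Fin r → ℕ, (∀ i, x i ≤ m i) ∧ S = univ.sigma fun i => range (x i) := by
  have hdown : ∀ i j, (⟨i, j + 1⟩ : Σ _ : Fin r, ℕ) ∈ S → (⟨i, j⟩ : Σ _ : Fin r, ℕ) ∈ S := by
    intro i j hj
    by_contra hj'
    have hT : (⟨i, j⟩ : Σ _ : Fin r, ℕ) ∈ (univ.sigma fun i => range (m i)) \ S := by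
      have := hS hj
      simp only [mem_sigma, mem_range, Finset.mem_sdiff] at this ⊢
      exact ⟨⟨this.1, by omega⟩, hj'⟩
    refine hw ?_
    have hz : (c i + (j + 1 : ℕ) - (c i + j) - 1) / (c i + (j + 1 : ℕ) - (c i + j)) = 0 := by
      rw [show c i + (j + 1 : ℕ) - (c i + j) - 1 = 0 by push_cast; ring, zero_div]
    rw [splitWeight, prod_eq_zero hj (prod_eq_zero hT hz), zero_mul, zero_mul]
  have hex : ∀ i, ∃ j, (⟨i, j⟩ : Σ _ : Fin r, ℕ) ∉ S := fun i =>
    ⟨m i, fun h => by simpa using hS h⟩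
  classical
  refine ⟨fun i => Nat.find (hex i), fun i => Nat.find_min' _ fun h => by simpa using hS h, ?_⟩
  ext ⟨i, j⟩
  simp only [mem_sigma, mem_univ, true_and, mem_range, Nat.lt_find_iff, not_not]
  refine ⟨fun h n hn => ?_, fun h => h j le_rfl⟩
  exact Nat.decreasingInduction' (P := fun n => (⟨i, n⟩ : Σ _ : Fin r, ℕ) ∈ S)
    (fun k _ _ hk => hdown i k hk) hn h

theorem poch_mul_prod_poch_eq_sum (a d z : ℂ)
    (hcc : ∀ i j : Fin r, i ≠ j → c i ≠ c j)
    (hcd : ∀ i, poch (1 + c i - d) (m i) ≠ 0)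
    (hcck : ∀ i k : Fin r, poch (1 + c i - c k) (m i) ≠ 0) :
    poch (1 + a - d) (∑ i, m i) * ∏ i, poch (c i + z) (m i) =
      (∏ i, poch (1 + c i - d) (m i)) *
        ∑ x ∈ Fintype.piFinset (fun i => range (m i + 1)), kmCoeff a d c m x *
          (poch (a + z) (∑ i, m i - ∑ i, x i) * poch (z + d - (∑ i, x i : ℕ)) (∑ i, x i)) := by
  have hu : Set.InjOn (fun p : Σ _ : Fin r, ℕ => c p.1 + (p.2 : ℂ))
      (univ.sigma fun i => range (m i) : Finset (Σ _ : Fin r, ℕ)) := by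
    rintro ⟨i, j⟩ hij ⟨k, l⟩ hkl h
    simp only [coe_sigma, Set.mem_sigma_iff, coe_range, Set.mem_Iio] at hij hkl h
    by_cases hik : i = k
    · subst hik
      simpa using h
    · exact absurd (by linear_combination h) (string_sub_ne_zero hcc hcck hik hij.2 hkl.2.le)
  have key := poch_mul_prod_eq_sum_powerset _ a d z _ hu
  have hprod : ∏ i, poch (c i + z) (m i) = ∏ p ∈ univ.sigma fun i : Fin r => range (m i),
      (c p.1 + (p.2 : ℂ) + z) := by
    rw [prod_sigma]
    refine prod_congr rfl fun i _ => prod_congr rfl fun j _ => by ring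
  have hcard : ∀ x : Fin r → ℕ, #(univ.sigma fun i : Fin r => range (x i)) = ∑ i, x i :=
    fun x => by simp
  rw [hcard] at key
  rw [hprod, key, mul_sum]
  symm
  refine sum_of_injOn (fun x => univ.sigma fun i => range (x i)) ?_ ?_ ?_ ?_
  · intro x _ y _ h
    funext i
    have h' : ∀ j, j < x i ↔ j < y i := fun j => by
      have := Finset.ext_iff.1 h ⟨i, j⟩
      simpa using this
    exact le_antisymm (not_lt.1 fun hlt => (lt_irrefl _ ((h' _).1 hlt)))
      (not_lt.1 fun hlt => (lt_irrefl _ ((h' _).2 hlt)))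
  · intro x hx
    simp only [coe_powerset, Set.mem_preimage, Set.mem_powerset_iff, coe_subset]
    refine sigma_mono subset_rfl fun i => range_mono ?_
    have := mem_range.1 (Fintype.mem_piFinset.1 hx i)
    omega
  · intro S hS hSx
    by_contra hw
    obtain ⟨x, hx, rfl⟩ := exists_eq_sigma_range_of_splitWeight_ne_zero c a d
      (mem_powerset.1 hS) (left_ne_zero_of_mul hw)
    refine hSx ⟨x, ?_, rfl⟩
    simpa [Nat.lt_succ_iff] using hx
  · intro x hx
    have hx' : ∀ i, x i ≤ m i := fun i => by
      have := Fintype.mem_piFinset.1 hx i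
      rw [mem_range] at this
      omega
    have hsd : (univ.sigma fun i : Fin r => range (m i)) \ (univ.sigma fun i => range (x i)) =
        univ.sigma fun i => Ico (x i) (m i) := by
      ext ⟨i, j⟩
      simp
      omega
    rw [hsd, splitWeight_strings a d hx' hcc hcd hcck, hcard, mul_assoc]

end Strings

/-- The value `₂F₁(a, b; d; 1)` in Gauss's summation theorem. -/
noncomputable def gaussValue (a b d : ℂ) : ℂ :=
  Complex.Gamma d * Complex.Gamma (d - a - b) / (Complex.Gamma (d - a) * Complex.Gamma (d - b))

lemma sub_sub_add_nat_ne_zero {a b d : ℂ} {n : ℕ} (h : (a + n + b - d).re < 0) (k : ℕ) :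
    d - a - b - n + k ≠ 0 := fun hk => by
  have := congrArg Complex.re hk
  simp at this h
  have := k.cast_nonneg (α := ℝ)
  linarith

lemma Gamma_eq_poch_mul_Gamma_sub {x : ℂ} {n : ℕ} (hx : ∀ k : ℕ, x - n + k ≠ 0) :
    Complex.Gamma x = poch (x - n) n * Complex.Gamma (x - n) := by
  rw [← Gamma_add_nat _ hx, sub_add_cancel]

lemma hasSum_of_hasSum_of_eq {f g : ℕ → ℂ} {u v : ℂ} (hf : HasSum f u) (hfg : ∀ k, g k = f k)
    (huv : v = u) : HasSum g v := by
  rwa [funext hfg, huv]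

lemma hasSum_gaussTerm_mul_descFactorial {a b d : ℂ} {s : ℕ} (h : (a + s + b - d).re < 0)
    (hd : ∀ k : ℕ, d + k ≠ 0) (hda : ∀ k : ℕ, d - a + k ≠ 0) (hdb : ∀ k : ℕ, d - b + k ≠ 0) :
    HasSum (fun k => gaussTerm a b d k * (k.descFactorial s : ℂ))
      (gaussValue a b d * (poch a s * poch b s / poch (d - a - b - s) s)) := by
  rw [← hasSum_nat_add_iff' s, sum_eq_zero fun k hk => by
    rw [Nat.descFactorial_of_lt (mem_range.1 hk), Nat.cast_zero, mul_zero], sub_zero]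
  have hG := (hasSum_gaussTerm (a := a + s) (b := b + s) (d := d + s)
    (by rwa [show a + s + (b + s) - (d + s) = a + s + b - d by ring])
    (fun k => by have := hd (s + k); push_cast at this; rwa [add_assoc])
    (fun k => by rw [add_sub_add_right_eq_sub]; exact hda k)
    (fun k => by rw [add_sub_add_right_eq_sub]; exact hdb k)).mul_left
      (poch a s * poch b s / poch d s)
  have hps : poch d s ≠ 0 := poch_ne_zero fun k _ => hd k
  have hq : poch (d - a - b - s) s ≠ 0 := poch_ne_zero fun k _ => sub_sub_add_nat_ne_zero h k
  refine hasSum_of_hasSum_of_eq hG (fun k => ?_) ?_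
  · have hpk : poch (d + s) k ≠ 0 := poch_ne_zero fun j _ => by
      have := hd (s + j); push_cast at this; rwa [add_assoc]
    have hf : ((k + s).factorial : ℂ) = k.factorial * ((k + s).descFactorial s : ℂ) := by
      have := Nat.factorial_mul_descFactorial (Nat.le_add_left s k)
      rw [Nat.add_sub_cancel] at this
      rw [← this, Nat.cast_mul]
    have h1 : ((k + s).descFactorial s : ℂ) ≠ 0 := by
      rw [Nat.cast_ne_zero, Ne, Nat.descFactorial_eq_zero_iff_lt]
      omega
    have h2 : (k.factorial : ℂ) ≠ 0 := Nat.cast_ne_zero.2 k.factorial_ne_zero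
    simp only [gaussTerm, hf]
    rw [add_comm k s] at h1 ⊢
    simp only [poch_add]
    field_simp
  · have e1 : Complex.Gamma (d - a - b) =
        poch (d - a - b - s) s * Complex.Gamma (d - a - b - s) :=
      Gamma_eq_poch_mul_Gamma_sub (sub_sub_add_nat_ne_zero h)
    rw [gaussValue, Gamma_add_nat d hd, add_sub_add_right_eq_sub, add_sub_add_right_eq_sub, e1,
      show d - a - (b + s) = d - a - b - s by ring]
    field_simp

lemma hasSum_gaussTerm_mul_poch {a b d : ℂ} {s t : ℕ}
    (h : (a + (s + t : ℕ) + b - d).re < 0) (hd : ∀ k : ℤ, d + k ≠ 0)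
    (hda : ∀ k : ℤ, d - a + k ≠ 0) (hdb : ∀ k : ℤ, d - b + k ≠ 0) :
    HasSum (fun k : ℕ => gaussTerm a b d k * (poch (a + k) s * poch (k + d - t) t))
      (gaussValue a b d * (poch a s * poch (d - a - (s + t : ℕ)) (s + t) *
        poch (d - b - t) t / poch (d - a - b - (s + t : ℕ)) (s + t))) := by
  have hsub : ∀ {y : ℂ}, (∀ k : ℤ, y + k ≠ 0) → ∀ n k : ℕ, y - n + k ≠ 0 := fun {y} hy n k => by
    have := hy (k - n)
    push_cast at this
    rwa [sub_add_eq_add_sub, add_sub_assoc]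
  have hG := (hasSum_gaussTerm (a := a + s) (b := b) (d := d - t)
    (by rwa [show a + s + b - (d - t) = a + (s + t : ℕ) + b - d by push_cast; ring])
    (hsub hd t)
    (fun k => by
      rw [show d - t - (a + s) = d - a - (s + t : ℕ) by push_cast; ring]
      exact hsub hda _ k)
    (fun k => by
      rw [show d - t - b = d - b - (t : ℕ) by ring]
      exact hsub hdb _ k)).mul_left (poch a s * poch (d - t) t)
  refine hasSum_of_hasSum_of_eq hG (fun k => ?_) ?_
  · have h1 : poch (d - t) k ≠ 0 := poch_ne_zero fun j _ => hsub hd t j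
    have h2 : poch d k ≠ 0 := poch_ne_zero fun j _ => by exact_mod_cast hd j
    have h3 : (k.factorial : ℂ) ≠ 0 := Nat.cast_ne_zero.2 k.factorial_ne_zero
    have e1 : poch a k * poch (a + k) s = poch a s * poch (a + s) k := by
      rw [← poch_add, ← poch_add, add_comm]
    have e2 : poch (d - t) k * poch (k + d - t) t = poch (d - t) t * poch d k := by
      have e := poch_add (d - t) t k
      rw [sub_add_cancel, add_comm t k, poch_add] at e
      rw [← e, show (k : ℂ) + d - t = d - t + k by ring]
    simp only [gaussTerm]
    field_simp
    linear_combination poch b k * (poch (d - t) k * poch (k + d - t) t * e1 +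
      poch a s * poch (a + s) k * e2)
  · have hq : poch (d - a - b - (s + t : ℕ)) (s + t) ≠ 0 :=
      poch_ne_zero fun k _ => sub_sub_add_nat_ne_zero h k
    have hq1 : poch (d - a - (s + t : ℕ)) (s + t) ≠ 0 := poch_ne_zero fun k _ => hsub hda _ k
    have hq2 : poch (d - b - t) t ≠ 0 := poch_ne_zero fun k _ => hsub hdb _ k
    rw [gaussValue, Gamma_eq_poch_mul_Gamma_sub (hsub hd t),
      Gamma_eq_poch_mul_Gamma_sub (hsub hda (s + t)), Gamma_eq_poch_mul_Gamma_sub (hsub hdb t),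
      Gamma_eq_poch_mul_Gamma_sub (sub_sub_add_nat_ne_zero h),
      show d - t - (a + s) - b = d - a - b - (s + t : ℕ) by push_cast; ring,
      show d - t - (a + s) = d - a - (s + t : ℕ) by push_cast; ring,
      show d - t - b = d - b - (t : ℕ) by ring]
    field_simp

lemma exists_prod_eq_sum_descFactorial {ι : Type*} (T : Finset ι) (u : ι → ℂ) :
    ∃ p : ℕ → ℂ, ∀ k : ℕ, ∏ i ∈ T, (u i + k) =
      ∑ s ∈ range (#T + 1), p s * (k.descFactorial s : ℂ) := by
  classical
  induction T using Finset.induction_on with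
  | empty => exact ⟨fun _ => 1, by simp⟩
  | insert v T hv ih =>
    obtain ⟨p, hp⟩ := ih
    refine ⟨fun s => (if s ≤ #T then (u v + s) * p s else 0) + if s = 0 then 0 else p (s - 1),
      fun k => ?_⟩
    have hstep : ∀ s : ℕ, (u v + k) * (k.descFactorial s : ℂ) =
        (u v + s) * (k.descFactorial s : ℂ) + (k.descFactorial (s + 1) : ℂ) := fun s => by
      rw [Nat.descFactorial_succ]
      rcases le_or_gt s k with h | h
      · rw [Nat.cast_mul, Nat.cast_sub h]
        ring
      · simp [Nat.descFactorial_of_lt h]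
    rw [prod_insert hv, hp, card_insert_of_notMem hv, mul_sum]
    simp only [add_mul (ite _ _ _), sum_add_distrib]
    rw [sum_range_succ (fun s => (if s ≤ #T then (u v + s) * p s else 0) *
        (k.descFactorial s : ℂ)) (#T + 1), if_neg (by omega), zero_mul, add_zero,
      sum_range_succ' (fun s => (if s = 0 then 0 else p (s - 1)) * (k.descFactorial s : ℂ)),
      if_pos rfl, zero_mul, add_zero, ← sum_add_distrib]
    refine sum_congr rfl fun s hs => ?_
    rw [if_pos (Nat.lt_succ_iff.1 (mem_range.1 hs)), if_neg (Nat.succ_ne_zero s),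
      Nat.add_sub_cancel]
    linear_combination p s * hstep s

lemma exists_prod_poch_eq_sum_descFactorial {r : ℕ} (c : Fin r → ℂ) (m : Fin r → ℕ) :
    ∃ p : ℕ → ℂ, ∀ k : ℕ, ∏ i, poch (c i + k) (m i) =
      ∑ s ∈ range (∑ i, m i + 1), p s * (k.descFactorial s : ℂ) := by
  obtain ⟨p, hp⟩ := exists_prod_eq_sum_descFactorial
    (univ.sigma fun i : Fin r => range (m i)) fun q => c q.1 + (q.2 : ℂ)
  refine ⟨p, fun k => ?_⟩
  have h := hp k
  rw [prod_sigma, card_sigma] at h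
  simp only [card_range] at h
  rw [← h]
  refine prod_congr rfl fun i _ => prod_congr rfl fun j _ => by ring

lemma continuous_poch (n : ℕ) : Continuous fun x => poch x n := by
  unfold poch
  fun_prop

section Main

variable {r : ℕ} {c : Fin r → ℂ} {m : Fin r → ℕ} {a b d : ℂ}

lemma hasSum_gaussTerm_mul_prod {p : ℕ → ℂ}
    (hp : ∀ k : ℕ, ∏ i, poch (c i + k) (m i) =
      ∑ s ∈ range (∑ i, m i + 1), p s * (k.descFactorial s : ℂ))
    (hconv : (a + (∑ i, m i : ℕ) + b - d).re < 0)
    (hd : ∀ k : ℕ, d + k ≠ 0) (hda : ∀ k : ℕ, d - a + k ≠ 0) (hdb : ∀ k : ℕ, d - b + k ≠ 0) :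
    HasSum (fun k : ℕ => gaussTerm a b d k * ∏ i, poch (c i + k) (m i))
      (gaussValue a b d * ∑ s ∈ range (∑ i, m i + 1),
        p s * (poch a s * poch b s / poch (d - a - b - s) s)) := by
  have h := hasSum_sum (s := range (∑ i, m i + 1)) fun s hs =>
    (hasSum_gaussTerm_mul_descFactorial (a := a) (b := b) (d := d) (s := s) (by
      have : (s : ℝ) ≤ (∑ i, m i : ℕ) := Nat.cast_le.2 (Nat.lt_succ_iff.1 (mem_range.1 hs))
      simp only [Complex.sub_re, Complex.add_re, Complex.natCast_re] at hconv ⊢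
      linarith) hd hda hdb).mul_left (p s)
  refine hasSum_of_hasSum_of_eq h (fun k => ?_) ?_
  · rw [hp, mul_sum]
    exact sum_congr rfl fun s _ => by ring
  · rw [mul_sum]
    exact sum_congr rfl fun s _ => by ring

/-- The right-hand side of the summation formula, up to factors independent of `x`. -/
noncomputable def kmSum {r : ℕ} (a b : ℂ) (c : Fin r → ℂ) (m : Fin r → ℕ) (d : ℂ) : ℂ :=
  (∏ i, poch (1 + c i - d) (m i)) * (poch a (∑ i, m i) / poch (1 + a + b - d) (∑ i, m i)) *
    ∑ x ∈ Fintype.piFinset (fun i => range (m i + 1)), kmCoeff a d c m x *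
      (poch (b + 1 - d) (∑ i, x i) / poch (1 - (∑ i, m i : ℕ) - a) (∑ i, x i))

lemma poch_ne_zero_of_le {x : ℂ} {k n : ℕ} (hkn : k ≤ n) (h : poch x n ≠ 0) : poch x k ≠ 0 := by
  rw [← Nat.add_sub_cancel' hkn, poch_add] at h
  exact left_ne_zero_of_mul h

lemma sum_descFactorial_eq_kmSum_of_generic {p : ℕ → ℂ}
    (hp : ∀ k : ℕ, ∏ i, poch (c i + k) (m i) =
      ∑ s ∈ range (∑ i, m i + 1), p s * (k.descFactorial s : ℂ))
    (hconv : (a + (∑ i, m i : ℕ) + b - d).re < 0)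
    (hd : ∀ k : ℤ, d + k ≠ 0) (hda : ∀ k : ℤ, d - a + k ≠ 0) (hdb : ∀ k : ℤ, d - b + k ≠ 0)
    (hcc : ∀ i j : Fin r, i ≠ j → c i ≠ c j)
    (hma : poch (1 - (∑ i, m i : ℕ) - a) (∑ i, m i) ≠ 0)
    (hcd : ∀ i, poch (1 + c i - d) (m i) ≠ 0)
    (hcck : ∀ i k : Fin r, poch (1 + c i - c k) (m i) ≠ 0) :
    ∑ s ∈ range (∑ i, m i + 1), p s * (poch a s * poch b s / poch (d - a - b - s) s) =
      kmSum a b c m d := by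
  have hd' : ∀ k : ℕ, d + k ≠ 0 := fun k => by exact_mod_cast hd k
  have hda' : ∀ k : ℕ, d - a + k ≠ 0 := fun k => by exact_mod_cast hda k
  have hdb' : ∀ k : ℕ, d - b + k ≠ 0 := fun k => by exact_mod_cast hdb k
  set M := ∑ i, m i with hM
  have hdab : ∀ k : ℕ, d - a - b + k ≠ 0 := fun k hk => by
    refine sub_sub_add_nat_ne_zero hconv (M + k) ?_
    push_cast
    linear_combination hk
  have hG : gaussValue a b d ≠ 0 :=
    div_ne_zero (mul_ne_zero (Gamma_ne_zero_of_add_nat_ne_zero hd')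
      (Gamma_ne_zero_of_add_nat_ne_zero hdab))
      (mul_ne_zero (Gamma_ne_zero_of_add_nat_ne_zero hda')
        (Gamma_ne_zero_of_add_nat_ne_zero hdb'))
  have hpa : poch (1 + a - d) M ≠ 0 := poch_ne_zero fun k _ hk => hda (-1 - k) (by
    push_cast
    linear_combination -hk)
  have h1 := (hasSum_gaussTerm_mul_prod hp hconv hd' hda' hdb').mul_left (poch (1 + a - d) M)
  have h2 := (hasSum_sum (s := Fintype.piFinset (fun i => range (m i + 1))) fun x hx =>
    (hasSum_gaussTerm_mul_poch (a := a) (b := b) (d := d) (s := M - ∑ i, x i) (t := ∑ i, x i)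
      (by
        rw [Nat.sub_add_cancel (sum_le_sum fun i _ =>
          Nat.lt_succ_iff.1 (mem_range.1 (Fintype.mem_piFinset.1 hx i)))]
        exact hconv) hd hda hdb).mul_left (kmCoeff a d c m x)).mul_left
          (∏ i, poch (1 + c i - d) (m i))
  have hfun : (fun k : ℕ => poch (1 + a - d) M *
      (gaussTerm a b d k * ∏ i, poch (c i + k) (m i))) = fun k : ℕ =>
      (∏ i, poch (1 + c i - d) (m i)) * ∑ x ∈ Fintype.piFinset (fun i => range (m i + 1)),
        kmCoeff a d c m x * (gaussTerm a b d k * (poch (a + k) (M - ∑ i, x i) *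
          poch (k + d - (∑ i, x i : ℕ)) (∑ i, x i))) := by
    funext k
    rw [mul_left_comm, poch_mul_prod_poch_eq_sum a d k hcc hcd hcck, mul_left_comm, mul_sum]
    congr 1
    exact sum_congr rfl fun x _ => by ring
  rw [hfun] at h1
  have h3 := h1.unique h2
  refine mul_left_cancel₀ (mul_ne_zero hpa hG) ?_
  rw [mul_assoc, h3, kmSum, ← hM, mul_sum, mul_sum, mul_sum]
  refine sum_congr rfl fun x hx => ?_
  have hX : ∑ i, x i ≤ M := sum_le_sum fun i _ =>
    Nat.lt_succ_iff.1 (mem_range.1 (Fintype.mem_piFinset.1 hx i))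
  rw [Nat.sub_add_cancel hX]
  generalize (∑ i, x i) = X at hX
  have hmaX : poch (1 - (M : ℂ) - a) X ≠ 0 := poch_ne_zero_of_le hX hma
  have habM : poch (1 + a + b - d) M ≠ 0 := poch_ne_zero fun k hk h => by
    refine sub_sub_add_nat_ne_zero hconv (M - 1 - k) ?_
    rw [Nat.cast_sub (by omega), Nat.cast_sub (by omega)]
    push_cast
    linear_combination -h
  have e1 : poch (d - a - M) M = (-1) ^ M * poch (1 + a - d) M := by
    rw [poch_reflect]; congr 2; ring
  have e2 : poch (d - a - b - M) M = (-1) ^ M * poch (1 + a + b - d) M := by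
    rw [poch_reflect]; congr 2; ring
  have e3 : poch (d - b - X) X = (-1) ^ X * poch (b + 1 - d) X := by
    rw [poch_reflect]; congr 2; ring
  have e4 : poch a M = poch a (M - X) * ((-1) ^ X * poch (1 - M - a) X) := by
    conv_lhs => rw [← Nat.sub_add_cancel hX, poch_add, poch_reflect (a + (M - X : ℕ)),
      Nat.cast_sub hX]
    congr 3
    ring
  have hs : ((-1 : ℂ) ^ M) ≠ 0 := by simp
  rw [e1, e2, e3, e4]
  field_simp

lemma sum_descFactorial_eq_kmSum {p : ℕ → ℂ}
    (hp : ∀ k : ℕ, ∏ i, poch (c i + k) (m i) =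
      ∑ s ∈ range (∑ i, m i + 1), p s * (k.descFactorial s : ℂ))
    (hconv : (a + (∑ i, m i : ℕ) + b - d).re < 0)
    (hcc : ∀ i j : Fin r, i ≠ j → c i ≠ c j)
    (habd : poch (1 + a + b - d) (∑ i, m i) ≠ 0)
    (hma : poch (1 - (∑ i, m i : ℕ) - a) (∑ i, m i) ≠ 0)
    (hcd : ∀ i, poch (1 + c i - d) (m i) ≠ 0)
    (hcck : ∀ i k : Fin r, poch (1 + c i - c k) (m i) ≠ 0) :
    ∑ s ∈ range (∑ i, m i + 1), p s * (poch a s * poch b s / poch (d - a - b - s) s) =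
      kmSum a b c m d := by
  have hcont : ∀ (y : ℂ) (n : ℕ),
      Tendsto (fun d' => poch (y - d') n) (𝓝 d) (𝓝 (poch (y - d) n)) := fun y n =>
    ((continuous_poch n).comp (continuous_const.sub continuous_id)).tendsto d
  have hF : Tendsto (fun d' => ∑ s ∈ range (∑ i, m i + 1),
      p s * (poch a s * poch b s / poch (d' - a - b - s) s)) (𝓝 d)
      (𝓝 (∑ s ∈ range (∑ i, m i + 1), p s * (poch a s * poch b s / poch (d - a - b - s) s))) := by
    refine tendsto_finsetSum _ fun s hs => (Tendsto.div tendsto_const_nhds ?_ ?_).const_mul _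
    · exact ((continuous_poch s).comp (by fun_prop :
        Continuous fun d' : ℂ => d' - a - b - s)).tendsto d
    · refine poch_ne_zero fun k _ hk => ?_
      refine sub_sub_add_nat_ne_zero hconv (∑ i, m i - s + k) ?_
      rw [Nat.cast_add, Nat.cast_sub (Nat.lt_succ_iff.1 (mem_range.1 hs))]
      linear_combination hk
  have hK : Tendsto (kmSum a b c m) (𝓝 d) (𝓝 (kmSum a b c m d)) := by
    unfold kmSum kmCoeff
    refine ((tendsto_finsetProd _ fun i _ => hcont _ _).mul
      (tendsto_const_nhds.div (hcont _ _) habd)).mul (tendsto_finsetSum _ fun x hx => ?_)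
    refine (Tendsto.mul_const _ (Tendsto.const_mul _ (tendsto_finsetProd _ fun i _ =>
      tendsto_const_nhds.div (hcont _ _) ?_))).mul ((hcont _ _).div_const _)
    exact poch_ne_zero_of_le
      (Nat.lt_succ_iff.1 (mem_range.1 (Fintype.mem_piFinset.1 hx i))) (hcd i)
  set B : Set ℂ := (Set.range fun k : ℤ => (k : ℂ)) ∪ (Set.range fun k : ℤ => a + k) ∪
    Set.range fun k : ℤ => b + k with hB
  have hBc : B.Countable :=
    ((Set.countable_range _).union (Set.countable_range _)).union (Set.countable_range _)
  have hfreq : ∃ᶠ d' in 𝓝 d, d' ∈ Bᶜ :=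
    mem_closure_iff_frequently.1 ((hBc.dense_compl ℝ) d)
  have hev1 : ∀ᶠ d' in 𝓝 d, (a + (∑ i, m i : ℕ) + b - d').re < 0 :=
    (Complex.continuous_re.comp (continuous_const.sub continuous_id)).continuousAt.eventually_lt
      continuousAt_const hconv
  have hev2 : ∀ᶠ d' in 𝓝 d, ∀ i, poch (1 + c i - d') (m i) ≠ 0 :=
    eventually_all.2 fun i => (hcont _ _).eventually_ne (hcd i)
  by_contra hne
  obtain ⟨d', hd', ⟨h1, h2⟩, h3⟩ := (hfreq.and_eventually
    ((hev1.and hev2).and ((hF.sub hK).eventually_ne (sub_ne_zero.2 hne)))).exists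
  refine h3 (sub_eq_zero.2
    (sum_descFactorial_eq_kmSum_of_generic hp h1 ?_ ?_ ?_ hcc hma h2 hcck))
  · exact fun k hk => hd' (Or.inl (Or.inl ⟨-k, by push_cast; linear_combination -hk⟩))
  · exact fun k hk => hd' (Or.inl (Or.inr ⟨-k, by push_cast; linear_combination -hk⟩))
  · exact fun k hk => hd' (Or.inr ⟨-k, by push_cast; linear_combination -hk⟩)

end Main

theorem stmt11 (r : ℕ) (a b d : ℂ) (c : Fin r → ℂ) (m : Fin r → ℕ)
    (hconv : (a + (∑ i, m i : ℕ) + b - d).re < 0)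
    (hd : ∀ k : ℕ, d + k ≠ 0)
    (hc : ∀ i, ∀ k : ℕ, c i + k ≠ 0)
    (hcc : ∀ i j : Fin r, i ≠ j → c i ≠ c j)
    (hda : ∀ k : ℕ, d - a + k ≠ 0) (hdb : ∀ k : ℕ, d - b + k ≠ 0)
    (habd : poch (1 + a + b - d) (∑ i, m i) ≠ 0)
    (hma : poch (1 - (∑ i, m i : ℕ) - a) (∑ i, m i) ≠ 0)
    (hcd : ∀ i, poch (1 + c i - d) (m i) ≠ 0)
    (hcck : ∀ i k : Fin r, poch (1 + c i - c k) (m i) ≠ 0) :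
    (∑' k : ℕ, poch a k * poch b k * (∏ i, poch (c i + m i) k) /
        ((k.factorial : ℂ) * poch d k * ∏ i, poch (c i) k)) =
      Complex.Gamma d * Complex.Gamma (d - a - b) /
          (Complex.Gamma (d - a) * Complex.Gamma (d - b)) *
        (∏ i, poch (c i + 1 - d) (m i) / poch (c i) (m i)) *
        (poch a (∑ i, m i) / poch (1 + a + b - d) (∑ i, m i)) *
        ∑ x ∈ Fintype.piFinset (fun i => Finset.range (m i + 1)),
          (∏ i : Fin r, ∏ j ∈ Finset.univ.filter (fun j => i < j),
              (c i + x i - c j - x j) / (c i - c j)) *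
            (poch (b + 1 - d) (∑ i, x i) /
              poch (1 - (∑ i, m i : ℕ) - a) (∑ i, x i)) *
            (∏ i : Fin r, poch (c i - a) (x i) / poch (1 + c i - d) (x i)) *
            ∏ i : Fin r, ∏ k : Fin r,
              poch (c i - c k - m k) (x i) / poch (1 + c i - c k) (x i) := by
  obtain ⟨p, hp⟩ := exists_prod_poch_eq_sum_descFactorial c m
  have hsum := (hasSum_gaussTerm_mul_prod hp hconv hd hda hdb).mul_left
    (∏ i, (poch (c i) (m i))⁻¹)
  rw [sum_descFactorial_eq_kmSum hp hconv hcc habd hma hcd hcck] at hsum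
  have hterm : ∀ k : ℕ, poch a k * poch b k * (∏ i, poch (c i + m i) k) /
      ((k.factorial : ℂ) * poch d k * ∏ i, poch (c i) k) =
      (∏ i, (poch (c i) (m i))⁻¹) * (gaussTerm a b d k * ∏ i, poch (c i + k) (m i)) := fun k => by
    have h : (∏ i, poch (c i + m i) k) / ∏ i, poch (c i) k =
        (∏ i, (poch (c i) (m i))⁻¹) * ∏ i, poch (c i + k) (m i) := by
      rw [← prod_div_distrib, ← prod_mul_distrib]
      refine prod_congr rfl fun i _ => ?_
      have h1 : poch (c i) k ≠ 0 := poch_ne_zero fun j _ => hc i j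
      have h2 : poch (c i) (m i) ≠ 0 := poch_ne_zero fun j _ => hc i j
      have h3 : poch (c i) (m i) * poch (c i + m i) k = poch (c i) k * poch (c i + k) (m i) := by
        rw [← poch_add, ← poch_add, add_comm]
      field_simp
      linear_combination h3
    rw [mul_left_comm, ← h, gaussTerm, div_mul_div_comm]
  rw [tsum_congr hterm, hsum.tsum_eq, kmSum, gaussValue, prod_div_distrib, div_eq_mul_inv
    (∏ i, poch (c i + 1 - d) (m i)), ← prod_inv_distrib]
  simp only [fun i => add_comm (c i) (1 : ℂ)]
  have hx : ∑ x ∈ Fintype.piFinset (fun i => range (m i + 1)), kmCoeff a d c m x *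
      (poch (b + 1 - d) (∑ i, x i) / poch (1 - (∑ i, m i : ℕ) - a) (∑ i, x i)) =
      ∑ x ∈ Fintype.piFinset (fun i => Finset.range (m i + 1)),
          (∏ i : Fin r, ∏ j ∈ Finset.univ.filter (fun j => i < j),
              (c i + x i - c j - x j) / (c i - c j)) *
            (poch (b + 1 - d) (∑ i, x i) /
              poch (1 - (∑ i, m i : ℕ) - a) (∑ i, x i)) *
            (∏ i : Fin r, poch (c i - a) (x i) / poch (1 + c i - d) (x i)) *
            ∏ i : Fin r, ∏ k : Fin r,
              poch (c i - c k - m k) (x i) / poch (1 + c i - c k) (x i) :=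
    sum_congr rfl fun x _ => by
      rw [kmCoeff]
      ring
  rw [hx]
  ring
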